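/- Let 𝓑' be the substructure of the labeled tree structure 𝒜' generated by {(1,⟨⟩)} (its underlying set is {(n,τ) : n ≥ 1}). Then 𝓑' is a Σ₁-elementary substructure of 𝒜'. -/

import Mathlib

open FirstOrder FirstOrder.Language

/-- The domain of the labeled tree structure `𝒜'`: pairs `(n,τ)` with `n ∈ ℕ` and
`τ ∈ ℤ^{<ω}` a finite sequence of integers. -/
abbrev TreeDom : Type := ℕ × List ℤ

/-- The function symbols of the languages `L₀` and `L₁`: a unary symbol `p` and a unary
symbol `c i` for each integer `i ∈ ℤ`. -/
inductive TreeFn : ℕ → Type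
  | p : TreeFn 1
  | c : ℤ → TreeFn 1

/-- The relation symbols of the language `L₁`: a single unary relation symbol `P`. -/
inductive TreeRel : ℕ → Type
  | P : TreeRel 1

/-- The language `L₁`: unary function symbols `p` and `c_i` (`i ∈ ℤ`) together with a unary
relation symbol `P`. -/
def L1 : Language := ⟨TreeFn, TreeRel⟩

/-- The parent function: `p^{𝒜'}(n,τ) = (n,τ⁻)` if `τ` is nonempty (`τ⁻` being `τ` with its
last entry removed), and `p^{𝒜'}(n,⟨⟩) = (n+1,⟨⟩)`. -/
def pInterp (x : TreeDom) : TreeDom :=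
  if x.2 = [] then (x.1 + 1, []) else (x.1, x.2.dropLast)

/-- The `i`-th child function: `c_i^{𝒜'}(n,τ) = (n, τ⌢i)`, the sequence `τ` with `i`
appended. -/
def cInterp (i : ℤ) (x : TreeDom) : TreeDom := (x.1, x.2 ++ [i])

/-- The labeled tree `L₁`-structure `𝒜'` on `TreeDom`, where `P^{𝒜'}(n,τ)` holds if and
only if `n + |τ|` is even. -/
instance treeStructure' : L1.Structure TreeDom where
  funMap {_n} f x :=
    match f with
    | TreeFn.p => pInterp (x 0)
    | TreeFn.c i => cInterp i (x 0)
  RelMap {_n} r x :=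
    match r with
    | TreeRel.P => Even ((x 0).1 + (x 0).2.length)

/-- `𝓑'`, the substructure of `𝒜'` generated by `{(1,⟨⟩)}`
(its underlying set is `{(n,τ) : n ≥ 1}`). -/
def TreeB' : L1.Substructure TreeDom :=
  Substructure.closure L1 ({((1 : ℕ), ([] : List ℤ))} : Set TreeDom)

/-- A substructure `S` of `M` is a Σ₁-elementary substructure if for every quantifier-free
formula `φ(x̄,ȳ)` and every tuple `v` of elements of `S`, if `M ⊨ ∃x̄ φ(x̄,v)` then
`S ⊨ ∃x̄ φ(x̄,v)`. -/
def Sigma1Elementary (L : Language) (M : Type*) [L.Structure M] (S : L.Substructure M) :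
    Prop :=
  ∀ (k m : ℕ) (φ : L.BoundedFormula (Fin k) m), φ.IsQF → ∀ v : Fin k → S,
    φ.exs.Realize (fun i => (v i : M)) → φ.exs.Realize v

theorem mem_TreeB'_of_pos (n : ℕ) (l : List ℤ) : ((n + 1, l) : TreeDom) ∈ TreeB' := by
  induction l using List.reverseRecOn with
  | nil =>
    induction n with
    | zero => exact Substructure.subset_closure rfl
    | succ n ih =>
      have := TreeB'.fun_mem (n := 1) TreeFn.p (fun _ => (n + 1, [])) (fun _ => ih)
      exact this
  | append_singleton l a ih =>
    have := TreeB'.fun_mem (n := 1) (TreeFn.c a) (fun _ => (n + 1, l)) (fun _ => ih)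
    exact this

theorem pos_of_mem_TreeB' {x : TreeDom} (hx : x ∈ TreeB') : 0 < x.1 := by
  refine Substructure.closure_induction hx (p := fun x => 0 < x.1) ?_ ?_
  · rintro x rfl
    exact Nat.one_pos
  · intro n f x h
    cases f with
    | p =>
      change 0 < (pInterp (x 0)).1
      unfold pInterp
      split_ifs
      · exact Nat.succ_pos _
      · exact h 0
    | c i => exact h 0

/-- Send the subtree `n = 0` to the subtree below `(1, [N])`, fixing all the rest. -/
def shiftMap (N : ℤ) : TreeDom → TreeDom
  | (0, l) => (1, N :: l)
  | (n + 1, l) => (n + 1, l)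

theorem shiftMap_mem (N : ℤ) (x : TreeDom) : shiftMap N x ∈ TreeB' := by
  rcases x with ⟨_ | n, l⟩
  · exact mem_TreeB'_of_pos 0 _
  · exact mem_TreeB'_of_pos n _

theorem shiftMap_p (N : ℤ) (x : TreeDom) : shiftMap N (pInterp x) = pInterp (shiftMap N x) := by
  rcases x with ⟨_ | n, _ | ⟨a, l⟩⟩ <;> simp [pInterp, shiftMap]

theorem shiftMap_c (N i : ℤ) (x : TreeDom) :
    shiftMap N (cInterp i x) = cInterp i (shiftMap N x) := by
  rcases x with ⟨_ | n, l⟩ <;> simp [cInterp, shiftMap]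

theorem shiftMap_P (N : ℤ) (x : TreeDom) :
    Even ((shiftMap N x).1 + (shiftMap N x).2.length) ↔ Even (x.1 + x.2.length) := by
  rcases x with ⟨_ | n, l⟩
  · simp only [shiftMap, List.length_cons]
    grind
  · simp [shiftMap]

theorem shiftMap_inj (N : ℤ) (x y : TreeDom) (hx : N ∉ x.2) (hy : N ∉ y.2)
    (h : shiftMap N x = shiftMap N y) : x = y := by
  rcases x with ⟨_ | n, l⟩ <;> rcases y with ⟨_ | m, k⟩ <;> simp [shiftMap] at h ⊢ <;> grind

/-- The map above as a homomorphism into the substructure. -/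
def shiftHom (N : ℤ) : L1.Hom TreeDom TreeB' where
  toFun x := ⟨shiftMap N x, shiftMap_mem N x⟩
  map_fun' {n} f x := by
    apply Subtype.ext
    cases f with
    | p => exact shiftMap_p N (x 0)
    | c i => exact shiftMap_c N i (x 0)
  map_rel' {n} r x h := by
    cases r with
    | P => exact (shiftMap_P N (x 0)).2 h

theorem term_avoid {α : Type} (t : L1.Term α) :
    ∀ᶠ N : ℤ in Filter.atTop, ∀ v : α → TreeDom, (∀ a, N ∉ (v a).2) → N ∉ (t.realize v).2 := by
  induction t with
  | var a => exact Filter.Eventually.of_forall fun N v h => h a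
  | func f ts ih =>
    cases f with
    | p =>
      filter_upwards [ih 0] with N hN v hv
      have := hN v hv
      change N ∉ (pInterp ((ts 0).realize v)).2
      unfold pInterp
      split_ifs
      · simp
      · exact fun h => this (List.mem_of_mem_dropLast h)
    | c i =>
      filter_upwards [ih 0, Filter.eventually_gt_atTop i] with N hN hi v hv
      have := hN v hv
      change N ∉ ((ts 0).realize v).2 ++ [i]
      simp only [List.mem_append, List.mem_singleton, not_or]
      exact ⟨this, hi.ne'⟩

theorem shift_sum {α β : Type} (N : ℤ) (v : α → TreeDom) (xs : β → TreeDom) :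
    Sum.elim (shiftHom N ∘ v) (shiftHom N ∘ xs) = shiftHom N ∘ Sum.elim v xs := by
  rw [Sum.comp_elim]

theorem qf_shift {α : Type} {m : ℕ} (φ : L1.BoundedFormula α m) (hφ : φ.IsQF) :
    ∀ᶠ N : ℤ in Filter.atTop, ∀ (v : α → TreeDom) (xs : Fin m → TreeDom),
      (∀ a, N ∉ (v a).2) → (∀ a, N ∉ (xs a).2) →
      (φ.Realize (shiftHom N ∘ v) (shiftHom N ∘ xs) ↔ φ.Realize v xs) := by
  induction hφ with
  | falsum => exact Filter.Eventually.of_forall fun N v xs _ _ => Iff.rfl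
  | of_isAtomic h =>
    cases h with
    | equal t₁ t₂ =>
      filter_upwards [term_avoid t₁, term_avoid t₂] with N h1 h2 v xs hv hxs
      have hs : ∀ a, N ∉ (Sum.elim v xs a).2 := by
        rintro (a | a)
        exacts [hv a, hxs a]
      rw [BoundedFormula.realize_bdEqual, BoundedFormula.realize_bdEqual, shift_sum,
        HomClass.realize_term, HomClass.realize_term]
      constructor
      · intro h
        exact shiftMap_inj N _ _ (h1 _ hs) (h2 _ hs) (congrArg Subtype.val h)
      · intro h
        rw [h]
    | rel R ts =>
      refine Filter.Eventually.of_forall fun N v xs _ _ => ?_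
      rw [BoundedFormula.realize_rel, BoundedFormula.realize_rel, shift_sum]
      simp only [HomClass.realize_term]
      cases R with
      | P => exact shiftMap_P N _
  | imp _ _ ih1 ih2 =>
    filter_upwards [ih1, ih2] with N h1 h2 v xs hv hxs
    rw [BoundedFormula.realize_imp, BoundedFormula.realize_imp, h1 v xs hv hxs, h2 v xs hv hxs]

theorem eventually_avoid {k : ℕ} (v : Fin k → TreeDom) :
    ∀ᶠ N : ℤ in Filter.atTop, ∀ a, N ∉ (v a).2 := by
  rw [Filter.eventually_all]
  intro a
  generalize (v a).2 = l
  induction l with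
  | nil => simp
  | cons b l ih =>
    filter_upwards [ih, Filter.eventually_gt_atTop b] with N h1 h2
    simp only [List.mem_cons, not_or]
    exact ⟨h2.ne', h1⟩

/-- `𝓑'` is a Σ₁-elementary substructure of `𝒜'`. -/
theorem stmt_14 : Sigma1Elementary L1 TreeDom TreeB' := by
  intro k m φ hφ v h
  rw [BoundedFormula.realize_exs] at h ⊢
  obtain ⟨xs, h⟩ := h
  obtain ⟨N, h1, h2, h3⟩ := ((qf_shift φ hφ).and ((eventually_avoid fun i => (v i : TreeDom)).and
    (eventually_avoid xs))).exists
  refine ⟨shiftHom N ∘ xs, ?_⟩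
  have := (h1 _ xs h2 h3).2 h
  convert this using 1
  funext i
  apply Subtype.ext
  have hp := pos_of_mem_TreeB' (v i).2
  change (v i : TreeDom) = shiftMap N (v i : TreeDom)
  generalize (v i : TreeDom) = x at hp
  rcases x with ⟨_ | n, l⟩
  · exact absurd hp (lt_irrefl _)
  · rfl
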